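/- arXiv:1611.02292 — 2 statements merged into one kernel-verified Lean document; each statement's English description precedes it below -/
import Mathlib

section
/- Let E ⊆ V be a subspace and let φ : E → ∧^{k−1} V* be a linear map satisfying i_X φ(Y) = − i_Y φ(X) for all X, Y ∈ E. Then there exists α ∈ ∧^k V* such that i_X α = φ(X) for all X ∈ E. -/
/-!
The form is built one basis vector of `E` at a time. Suppose `i_X α = φ X` holds for some of the
basis vectors, and let `e` be a further one. The defect `β = φ e - i_e α` is killed by `i_X` for
those `X` and for `e` itself, by the skew-symmetry of `φ` and of `α`. If `ξ` is a linear form on `V`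
extending the coordinate function of `e` on `E`, then `i_X (ξ ∧ β) = ξ X • β` for all of these `X`,
since the other term `ξ ∧ i_X β` vanishes (`iprod_wedge`). Hence `α + ξ ∧ β` has the right
contraction with `e` too, and unchanged contractions with the earlier basis vectors.
-/

open Module Submodule

noncomputable section

/-- `∧^m V^*`, modeled as alternating `m`-linear forms on `V`. -/
abbrev Alt (V : Type*) [AddCommGroup V] [Module ℝ V] (m : ℕ) :=
  V [⋀^Fin m]→ₗ[ℝ] ℝ

/-- The interior product `i_X : ∧^{m+1} V^* → ∧^m V^*`, as a linear map in the form. -/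
def iprod (V : Type*) [AddCommGroup V] [Module ℝ V] (m : ℕ) (X : V) :
    Alt V (m + 1) →ₗ[ℝ] Alt V m :=
  AlternatingMap.curryLeftLinearMap.flip X

lemma iprod_add_left {V : Type*} [AddCommGroup V] [Module ℝ V] (m : ℕ) (X Y : V)
    (α : Alt V (m + 1)) : iprod V m (X + Y) α = iprod V m X α + iprod V m Y α := by
  simp [iprod]

lemma iprod_smul_left {V : Type*} [AddCommGroup V] [Module ℝ V] (m : ℕ) (c : ℝ) (X : V)
    (α : Alt V (m + 1)) : iprod V m (c • X) α = c • iprod V m X α := by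
  simp [iprod]

/-- The `∧^m V^*`-valued pairing on `W = V ⊕ ∧^{m+1} V^*`:
`⟨(X,α),(Y,β)⟩ = i_X β + i_Y α`. -/
def pairW (V : Type*) [AddCommGroup V] [Module ℝ V] (m : ℕ)
    (u v : V × Alt V (m + 1)) : Alt V m :=
  iprod V m u.1 v.2 + iprod V m v.1 u.2

lemma pairW_add_left {V : Type*} [AddCommGroup V] [Module ℝ V] (m : ℕ)
    (u u' v : V × Alt V (m + 1)) :
    pairW V m (u + u') v = pairW V m u v + pairW V m u' v := by
  simp only [pairW, Prod.fst_add, Prod.snd_add, iprod_add_left, map_add]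
  abel

lemma pairW_smul_left {V : Type*} [AddCommGroup V] [Module ℝ V] (m : ℕ) (c : ℝ)
    (u v : V × Alt V (m + 1)) :
    pairW V m (c • u) v = c • pairW V m u v := by
  simp only [pairW, Prod.smul_fst, Prod.smul_snd, iprod_smul_left, map_smul, smul_add]

/-- A subspace of `W = V ⊕ ∧^{m+1}V^*` is isotropic if the pairing vanishes on it. -/
def IsIsotropic (V : Type*) [AddCommGroup V] [Module ℝ V] (m : ℕ)
    (L : Submodule ℝ (V × Alt V (m + 1))) : Prop :=
  ∀ u ∈ L, ∀ v ∈ L, pairW V m u v = 0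

/-- The orthogonal `L^⊥` of a subspace `L ⊆ V ⊕ ∧^{m+1}V^*` w.r.t. the pairing. -/
def perpW (V : Type*) [AddCommGroup V] [Module ℝ V] (m : ℕ)
    (L : Submodule ℝ (V × Alt V (m + 1))) : Submodule ℝ (V × Alt V (m + 1)) where
  carrier := {w | ∀ l ∈ L, pairW V m w l = 0}
  add_mem' := by
    intro a b ha hb l hl
    rw [pairW_add_left, ha l hl, hb l hl, add_zero]
  zero_mem' := by
    intro l hl
    simp [pairW, iprod]
  smul_mem' := by
    intro c a ha l hl
    rw [pairW_smul_left, ha l hl, smul_zero]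

/-- The annihilator `Ann(E) ⊆ ∧^{m+1} V^*` of a subspace `E ⊆ V`. -/
def AnnE (V : Type*) [AddCommGroup V] [Module ℝ V] (m : ℕ) (E : Submodule ℝ V) :
    Submodule ℝ (Alt V (m + 1)) where
  carrier := {α | ∀ X ∈ E, iprod V m X α = 0}
  add_mem' := by
    intro a b ha hb X hX
    rw [map_add, ha X hX, hb X hX, add_zero]
  zero_mem' := by intro X hX; simp
  smul_mem' := by
    intro c a ha X hX
    rw [map_smul, ha X hX, smul_zero]

/-- The annihilator `S° ⊆ V` of a subspace `S ⊆ ∧^{m+1} V^*`. -/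
def polarS (V : Type*) [AddCommGroup V] [Module ℝ V] (m : ℕ)
    (S : Submodule ℝ (Alt V (m + 1))) : Submodule ℝ V where
  carrier := {X | ∀ α ∈ S, iprod V m X α = 0}
  add_mem' := by
    intro a b ha hb α hα
    show iprod V m (a + b) α = 0
    rw [iprod_add_left, ha α hα, hb α hα, add_zero]
  zero_mem' := by
    intro α hα
    show iprod V m 0 α = 0
    simp [iprod]
  smul_mem' := by
    intro c a ha α hα
    show iprod V m (c • a) α = 0
    rw [iprod_smul_left, ha α hα, smul_zero]

/-- The `B`-field transform `e^B (X, α) = (X, α + i_X B)`. -/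
def eB (V : Type*) [AddCommGroup V] [Module ℝ V] (m : ℕ) (B : Alt V (m + 2)) :
    (V × Alt V (m + 1)) →ₗ[ℝ] (V × Alt V (m + 1)) :=
  LinearMap.prod (LinearMap.fst ℝ V (Alt V (m + 1)))
    (LinearMap.snd ℝ V (Alt V (m + 1)) + B.curryLeft.comp (LinearMap.fst ℝ V (Alt V (m + 1))))

/-- The projection `pr₁(L) ⊆ V` of a subspace `L ⊆ V ⊕ ∧^{m+1}V^*`. -/
def pr1 (V : Type*) [AddCommGroup V] [Module ℝ V] (m : ℕ)
    (L : Submodule ℝ (V × Alt V (m + 1))) : Submodule ℝ V :=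
  Submodule.map (LinearMap.fst ℝ V (Alt V (m + 1))) L

/-- The projection `pr₂(L) ⊆ ∧^{m+1}V^*` of a subspace `L ⊆ V ⊕ ∧^{m+1}V^*`. -/
def pr2S (V : Type*) [AddCommGroup V] [Module ℝ V] (m : ℕ)
    (L : Submodule ℝ (V × Alt V (m + 1))) : Submodule ℝ (Alt V (m + 1)) :=
  Submodule.map (LinearMap.snd ℝ V (Alt V (m + 1))) L

/-- `L ∩ V`, viewed as a subspace of `V` (identifying `V` with `V ⊕ 0`). -/
def capV (V : Type*) [AddCommGroup V] [Module ℝ V] (m : ℕ)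
    (L : Submodule ℝ (V × Alt V (m + 1))) : Submodule ℝ V :=
  Submodule.comap (LinearMap.inl ℝ V (Alt V (m + 1))) L

/-- `L ∩ ∧^{m+1}V^*`, viewed as a subspace of `∧^{m+1}V^*`
(identifying `∧^{m+1}V^*` with `0 ⊕ ∧^{m+1}V^*`). -/
def capF (V : Type*) [AddCommGroup V] [Module ℝ V] (m : ℕ)
    (L : Submodule ℝ (V × Alt V (m + 1))) : Submodule ℝ (Alt V (m + 1)) :=
  Submodule.comap (LinearMap.inr ℝ V (Alt V (m + 1))) L

/-- The graph `gr(ω) = {(X, i_X ω) : X ∈ V}` of `ω ∈ ∧^{m+2}V^*`. -/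
def grOmega (V : Type*) [AddCommGroup V] [Module ℝ V] (m : ℕ) (ω : Alt V (m + 2)) :
    Submodule ℝ (V × Alt V (m + 1)) :=
  LinearMap.range (LinearMap.prod LinearMap.id ω.curryLeft)

/-- `L` is weakly lagrangian if it is isotropic and `L ∩ V = pr₂(L)°`. -/
def IsWeaklyLagrangian (V : Type*) [AddCommGroup V] [Module ℝ V] (m : ℕ)
    (L : Submodule ℝ (V × Alt V (m + 1))) : Prop :=
  IsIsotropic V m L ∧ capV V m L = polarS V m (pr2S V m L)


/-- The exterior product `ξ ∧ β` of a linear form with an `m`-form, normalized so that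
`(ξ ∧ β) v = ∑ i, (-1)^i * ξ (v i) * β (i.removeNth v)`. -/
def wedgeOne {V : Type*} [AddCommGroup V] [Module ℝ V] {m : ℕ} (ξ : V →ₗ[ℝ] ℝ) (β : Alt V m) :
    Alt V (m + 1) :=
  AlternatingMap.alternatizeUncurryFin (ξ.smulRight β)

lemma iprod_apply {V : Type*} [AddCommGroup V] [Module ℝ V] {m : ℕ} (X : V) (α : Alt V (m + 1))
    (v : Fin m → V) : iprod V m X α v = α (Matrix.vecCons X v) := rfl

/-- The antiderivation rule `i_X (ξ ∧ β) = ξ X • β - ξ ∧ i_X β` when `i_X β = 0`. The latter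
condition is phrased through argument lists with first entry `X`, so that it is vacuous for
`m = 0`. -/
lemma iprod_wedge {V : Type*} [AddCommGroup V] [Module ℝ V] {m : ℕ} (ξ : V →ₗ[ℝ] ℝ)
    (β : Alt V m) (X : V)
    (hβ : ∀ (v : Fin m → V) (i : Fin m), (i : ℕ) = 0 → v i = X → β v = 0) :
    iprod V m X (wedgeOne ξ β) = ξ X • β := by
  ext v
  rw [iprod_apply, wedgeOne, AlternatingMap.alternatizeUncurryFin_apply, Fin.sum_univ_succ,
    Finset.sum_eq_zero]
  · simp [Matrix.vecCons]
  · intro i _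
    have hm : 0 < m := i.pos
    rw [LinearMap.smulRight_apply, AlternatingMap.smul_apply, hβ _ ⟨0, hm⟩ rfl, smul_zero,
      smul_zero]
    obtain ⟨n, rfl⟩ : ∃ n, m = n + 1 := ⟨m - 1, by omega⟩
    simp [Fin.removeNth, Matrix.vecCons]

/-- Skew-symmetry of a form under exchange of its first argument with the one at position `i + 1`. -/
lemma alt_cons_swap {V : Type*} [AddCommGroup V] [Module ℝ V] {m : ℕ} (α : Alt V (m + 1))
    (X Y : V) (v : Fin m → V) (i : Fin m) :
    α (Matrix.vecCons X (Function.update v i Y)) =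
      - α (Matrix.vecCons Y (Function.update v i X)) := by
  rw [← α.map_swap _ (Fin.succ_ne_zero i).symm]
  congr 1
  ext j
  refine Fin.cases ?_ (fun j => ?_) j
  · simp
  · by_cases h : j = i
    · subst h; simp
    · have : Equiv.swap 0 i.succ j.succ = j.succ :=
        Equiv.swap_apply_of_ne_of_ne (Fin.succ_ne_zero j) (by simpa using h)
      simp [this, h]

/-- A linear map `φ : E → ∧^{k-1} V^*` with `i_X φ(Y) = -i_Y φ(X)`
for all `X, Y ∈ E` is of the form `φ(X) = i_X α` for some `α ∈ ∧^k V^*`.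
(Here the `k` of the statement is `m + 1`, so `∧^{k-1}V^* = Alt V m`; the
skew-symmetry `i_X φ(Y) = -i_Y φ(X)`, an identity of `(k-2)`-forms, is encoded
by evaluation: `φ(Y)(X, w) = -φ(X)(Y, w)` for every argument list with the
first slot (index `i = 0`) updated.) -/
theorem stmt_7 {V : Type*} [AddCommGroup V] [Module ℝ V] [FiniteDimensional ℝ V]
    (m : ℕ) (hmn : m + 1 ≤ finrank ℝ V - 1)
    (E : Submodule ℝ V) (φ : E →ₗ[ℝ] Alt V m)
    (hskew : ∀ (X Y : E) (v : Fin m → V) (i : Fin m), (i : ℕ) = 0 →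
      φ Y (Function.update v i (X : V)) = - φ X (Function.update v i (Y : V))) :
    ∃ α : Alt V (m + 1), ∀ X : E, iprod V m (X : V) α = φ X := by
  classical
  let b := Module.finBasis ℝ E
  have key : ∀ s : Finset (Fin (finrank ℝ E)),
      ∃ α : Alt V (m + 1), ∀ j ∈ s, iprod V m (b j : V) α = φ (b j) := by
    intro s
    induction s using Finset.induction_on with
    | empty => exact ⟨0, by simp⟩
    | insert a s ha ih =>
      obtain ⟨α, hα⟩ := ih
      obtain ⟨ξ, hξ⟩ := LinearMap.exists_extend (b.coord a)
      have hξb : ∀ j, ξ (b j : V) = if j = a then 1 else 0 := by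
        intro j
        have := LinearMap.congr_fun hξ (b j)
        simpa [Finsupp.single_apply] using this
      have hβ : ∀ j ∈ insert a s, ∀ (v : Fin m → V) (i : Fin m), (i : ℕ) = 0 → v i = b j →
          (φ (b a) - iprod V m (b a : V) α) v = 0 := by
        intro j hj v i hi hv
        have hupd : Function.update v i (b j : V) = v := by rw [← hv, Function.update_eq_self]
        have h1 := hskew (b j) (b a) v i hi
        have h2 := alt_cons_swap α (b a : V) (b j : V) v i
        rw [hupd] at h1 h2
        rw [AlternatingMap.sub_apply, iprod_apply, h1, h2]
        rcases Finset.mem_insert.1 hj with rfl | hj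
        -- For `j = a` both terms equal their own negatives.
        · rw [hupd] at h1 h2 ⊢
          linarith
        · rw [← hα j hj, iprod_apply]
          ring
      refine ⟨α + wedgeOne ξ (φ (b a) - iprod V m (b a : V) α), fun j hj => ?_⟩
      rw [map_add, iprod_wedge _ _ _ (hβ j hj), hξb]
      rcases Finset.mem_insert.1 hj with rfl | hj
      · simp
      · rw [if_neg (ne_of_mem_of_not_mem hj ha), zero_smul, add_zero, hα j hj]
  obtain ⟨α, hα⟩ := key Finset.univ
  refine ⟨α, fun X => ?_⟩
  have hext : α.curryLeft ∘ₗ E.subtype = φ := b.ext fun j => hα j (Finset.mem_univ j)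
  exact LinearMap.congr_fun hext X

end
end

section
/- Let Λ : ∧^k V* → V be a linear map defined on the whole of ∧^k V* satisfying i_{Λ(α)} β = − i_{Λ(β)} α for all α, β ∈ ∧^k V*. Then the graph L := {(Λ(α), α) : α ∈ ∧^k V*} is a lagrangian subspace of V ⊕ ∧^k V*, i.e., L = L⊥. -/
/-!
The skew-symmetry of `Λ` says that its graph is isotropic. Conversely, let `(Y, β)` be orthogonal to
the graph. Then `i_Y α = -i_{Λ(α)} β = i_{Λ(β)} α` for every form `α`, so `Y - Λ(β)` is annihilated
by all `(m+1)`-forms. As `m + 1 ≤ dim V`, a nonzero vector `X` is the first member of an independent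
family of `m + 1` vectors, and some `(m+1)`-form does not vanish on that family
(`eq_zero_of_iprod_eq_zero`). Hence `Y = Λ(β)`.
-/

open Module Submodule

noncomputable section

/-- A nonzero vector starts an independent family of any length up to the dimension. -/
lemma exists_linearIndependent_zero_eq {V : Type*} [AddCommGroup V] [Module ℝ V]
    [FiniteDimensional ℝ V] {X : V} (hX : X ≠ 0) (m : ℕ) (hm : m + 1 ≤ finrank ℝ V) :
    ∃ v : Fin (m + 1) → V, LinearIndependent ℝ v ∧ v 0 = X := by
  induction m with
  | zero =>
    exact ⟨fun _ => X, LinearIndependent.of_subsingleton (ι := Fin 1) (v := fun _ => X) 0 hX, rfl⟩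
  | succ m ih =>
    obtain ⟨v, hv, h0⟩ := ih (by omega)
    obtain ⟨x, hx⟩ := exists_linearIndependent_snoc_of_lt_finrank hv (by omega)
    refine ⟨Fin.snoc v x, hx, ?_⟩
    rw [← h0, ← Fin.castSucc_zero, Fin.snoc_castSucc]

/-- An alternating form of the same length as an independent family can be chosen to take the
value `1` on it: pull back the determinant along a left inverse of the map `eᵢ ↦ vᵢ`. -/
lemma exists_alt_apply_eq_one {V : Type*} [AddCommGroup V] [Module ℝ V] {k : ℕ}
    {v : Fin k → V} (hv : LinearIndependent ℝ v) : ∃ α : Alt V k, α v = 1 := by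
  obtain ⟨f, hf⟩ := (Fintype.linearCombination ℝ v).exists_leftInverse_of_injective
    (LinearMap.ker_eq_bot.2 hv.fintypeLinearCombination_injective)
  refine ⟨Matrix.detRowAlternating.compLinearMap f, ?_⟩
  have h : (fun i => f (v i)) = (1 : Matrix (Fin k) (Fin k) ℝ) := by
    funext i
    have := LinearMap.congr_fun hf (Pi.single i 1)
    rw [LinearMap.comp_apply, Fintype.linearCombination_apply_single, one_smul] at this
    rw [this]
    ext j
    simp [Matrix.one_apply, Pi.single_apply, eq_comm]
  change Matrix.det (fun i => f (v i)) = 1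
  rw [h, Matrix.det_one]

/-- The pairing `V × ∧^{m+1} V^* → ∧^m V^*` is nondegenerate in `V` when `m + 1 ≤ dim V`. -/
lemma eq_zero_of_iprod_eq_zero {V : Type*} [AddCommGroup V] [Module ℝ V]
    [FiniteDimensional ℝ V] (m : ℕ) (hm : m + 1 ≤ finrank ℝ V) {X : V}
    (h : ∀ α : Alt V (m + 1), iprod V m X α = 0) : X = 0 := by
  by_contra hX
  obtain ⟨v, hv, h0⟩ := exists_linearIndependent_zero_eq hX m hm
  obtain ⟨α, hα⟩ := exists_alt_apply_eq_one hv
  have h1 : α (Matrix.vecCons X (Matrix.vecTail v)) = 0 :=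
    congrArg (fun γ : Alt V m => γ (Matrix.vecTail v)) (h α)
  rw [← h0] at h1
  have h2 : Matrix.vecCons (v 0) (Matrix.vecTail v) = v := Matrix.cons_head_tail v
  rw [h2, hα] at h1
  exact one_ne_zero h1

/-- If `Λ : ∧^k V^* → V` is defined on all of `∧^k V^*` and
satisfies `i_{Λ(α)} β = - i_{Λ(β)} α`, then its graph is lagrangian.
(Here the `k` of the statement is `m + 1`.) -/
theorem stmt_11 {V : Type*} [AddCommGroup V] [Module ℝ V] [FiniteDimensional ℝ V]
    (m : ℕ) (hmn : m + 1 ≤ finrank ℝ V - 1)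
    (lam : Alt V (m + 1) →ₗ[ℝ] V)
    (hskew : ∀ α β : Alt V (m + 1),
      iprod V m (lam α) β = - iprod V m (lam β) α) :
    LinearMap.range (LinearMap.prod lam LinearMap.id) =
      perpW V m (LinearMap.range (LinearMap.prod lam LinearMap.id)) := by
  ext ⟨Y, β⟩
  constructor
  · rintro ⟨γ, hγ⟩ _ ⟨α, rfl⟩
    rw [← hγ]
    change iprod V m (lam γ) α + iprod V m (lam α) γ = 0
    rw [hskew γ α, neg_add_cancel]
  · intro h
    have hY : Y + lam (-β) = 0 := by
      refine eq_zero_of_iprod_eq_zero m (by omega) fun α => ?_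
      have h1 : iprod V m Y α + iprod V m (lam α) β = 0 := h _ ⟨α, rfl⟩
      rw [iprod_add_left, hskew (-β) α, map_neg, neg_neg]
      exact h1
    refine ⟨β, ?_⟩
    rw [map_neg, ← sub_eq_add_neg, sub_eq_zero] at hY
    rw [hY]
    rfl

end
end
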